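/- arXiv:1912.08758 — 3 statements merged into one kernel-verified Lean document; each statement's English description precedes it below -/
import Mathlib

section
/- Explicit relation between the RVI and VI iterates: with J_0 = V_0 continuous and strictly positive, J_n generated by the VI with constant Λ > 0 and V_n by the RVI with reference point x_0, for every n ≥ 0 and every x ∈ S one has V_{n+1}(x) = Λ · J_{n+1}(x) / J_n(x_0); in particular V_{n+1}(x_0)/J_{n+1}(x_0) = Λ / J_n(x_0). -/
open MeasureTheory Filter Topology

/-!
Both iterations apply the same operator `T f x = inf_u e^{k(x,u)} ∫ f dp(x,u)`, the value iteration
rescaling the result by `Λ⁻¹` and the relative value iteration by the inverse of the current value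
at `x₀`. Since `T` is positively homogeneous, `f ↦ f(x₀)⁻¹ T f` does not change when `f` is
multiplied by a positive constant, so as long as `V n` is a positive multiple of `J n`, the
iterate `V (n+1)` is `(J n x₀)⁻¹ T (J n) = (Λ / J n x₀) J (n+1)`, again a positive multiple. This
requires `J n x₀ > 0` for all `n`, which holds because `T` preserves the cone of positive bounded
continuous functions: the Feller property makes the quantity under the infimum jointly continuous,
and the infimum over the compact action space is attained.
-/

section RelativeIteration

variable {𝕜 M : Type*} [Field 𝕜] [MulAction 𝕜 M] {T : M → M} {ℓ : M → 𝕜}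

theorem inv_smul_map_smul {c : 𝕜} (hc : c ≠ 0) {f : M} (hT : T (c • f) = c • T f)
    (hℓ : ℓ (c • f) = c * ℓ f) : (ℓ (c • f))⁻¹ • T (c • f) = (ℓ f)⁻¹ • T f := by
  rw [hT, hℓ, smul_smul, mul_inv, mul_right_comm, inv_mul_cancel₀ hc, one_mul]

theorem relative_iterate_succ_eq_smul [LinearOrder 𝕜] [IsStrictOrderedRing 𝕜]
    (hT : ∀ c : 𝕜, 0 < c → ∀ f, T (c • f) = c • T f)
    (hℓ : ∀ c : 𝕜, 0 < c → ∀ f, ℓ (c • f) = c * ℓ f)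
    {Λ : 𝕜} (hΛ : 0 < Λ) {J V : ℕ → M} (hJV : J 0 = V 0)
    (hJ : ∀ n, J (n + 1) = Λ⁻¹ • T (J n)) (hV : ∀ n, V (n + 1) = (ℓ (V n))⁻¹ • T (V n))
    (hpos : ∀ n, 0 < ℓ (J n)) (n : ℕ) : V (n + 1) = (Λ / ℓ (J n)) • J (n + 1) := by
  have succ_eq_of_eq_smul {n : ℕ} {c : 𝕜} (hc : 0 < c) (h : V n = c • J n) :
      V (n + 1) = (Λ / ℓ (J n)) • J (n + 1) :=
    calc V (n + 1) = (ℓ (J n))⁻¹ • T (J n) := by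
          rw [hV, h, inv_smul_map_smul hc.ne' (hT c hc _) (hℓ c hc _)]
      _ = (Λ / ℓ (J n)) • J (n + 1) := by
          rw [hJ, smul_smul, div_mul_eq_mul_div, mul_inv_cancel₀ hΛ.ne', one_div]
  induction n with
  | zero => exact succ_eq_of_eq_smul one_pos (by rw [one_smul, hJV])
  | succ n ih => exact succ_eq_of_eq_smul (div_pos hΛ (hpos n)) ih

end RelativeIteration

section CompactInfimum

variable {X ι α : Type*} [TopologicalSpace X] [TopologicalSpace ι] [CompactSpace ι]
  [ConditionallyCompleteLinearOrder α] [TopologicalSpace α]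

theorem lt_ciInf_of_continuous [Nonempty ι] [ClosedIicTopology α] {g : ι → α} (hg : Continuous g)
    {a : α} (h : ∀ i, a < g i) : a < ⨅ i, g i := by
  obtain ⟨i, hi⟩ := (isCompact_range hg).sInf_mem (Set.range_nonempty g)
  exact (h i).trans_eq hi

theorem continuous_ciInf_of_compactSpace [OrderTopology α] {g : X → ι → α}
    (hg : Continuous fun q : X × ι => g q.1 q.2) : Continuous fun x => ⨅ i, g x i := by
  simpa only [Set.image_univ, sInf_range] using isCompact_univ.continuous_sInf hg

end CompactInfimum

theorem integral_pos_of_forall_pos {Ω : Type*} [MeasurableSpace Ω] {μ : Measure Ω} [NeZero μ]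
    {f : Ω → ℝ} (hf : Integrable f μ) (hpos : ∀ y, 0 < f y) : 0 < ∫ y, f y ∂μ := by
  have support_eq : Function.support f = Set.univ :=
    Set.eq_univ_of_forall fun y => (hpos y).ne'
  rw [integral_pos_iff_support_of_nonneg (fun y => (hpos y).le) hf, support_eq]
  exact NeZero.pos _

theorem continuous_probabilityMeasure_of_withDensity {Q S : Type*} [TopologicalSpace Q]
    [FirstCountableTopology Q] [LocallyCompactSpace Q] [TopologicalSpace S] [CompactSpace S]
    [MeasurableSpace S] [OpensMeasurableSpace S] {γ : Measure S} [IsFiniteMeasure γ]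
    {φ : Q → S → ℝ} (hφ : Continuous fun r : Q × S => φ r.1 r.2) {p : Q → ProbabilityMeasure S}
    (hp : ∀ q, (p q : Measure S) = γ.withDensity fun y => ENNReal.ofReal (φ q y)) :
    Continuous p := by
  rw [ProbabilityMeasure.continuous_iff_forall_continuous_integral]
  intro f
  have integral_eq (q : Q) : ∫ y, f y ∂(p q : Measure S) = ∫ y, max (φ q y) 0 * f y ∂γ := by
    have measurable_density : Measurable fun y => ENNReal.ofReal (φ q y) :=
      (hφ.comp (Continuous.prodMk_right q)).measurable.ennreal_ofReal
    rw [hp, integral_withDensity_eq_integral_toReal_smul measurable_density (by simp)]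
    simp only [ENNReal.toReal_ofReal', smul_eq_mul]
  have continuous_integrand : Continuous fun r : Q × S => max (φ r.1 r.2) 0 * f r.2 := by fun_prop
  simpa only [integral_eq, setIntegral_univ] using
    continuous_parametric_integral_of_continuous (μ := γ) continuous_integrand isCompact_univ

/-- The Bellman operator of risk-sensitive (multiplicative) control with running cost `k` and
transition kernel `p`, common to the value iteration and the relative value iteration. -/
noncomputable def riskSensitiveBellman {S U : Type*} [MeasurableSpace S] (k : S → U → ℝ)
    (p : S → U → Measure S) (f : S → ℝ) (x : S) : ℝ :=
  ⨅ u, Real.exp (k x u) * ∫ y, f y ∂(p x u)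

/-- The cone of positive bounded continuous functions, in which the value iterates stay. Only an
upper bound is recorded, as positivity supplies the lower one. -/
structure IsPosBddContinuous {S : Type*} [TopologicalSpace S] (f : S → ℝ) : Prop where
  continuous : Continuous f
  bddAbove : BddAbove (Set.range f)
  pos : ∀ x, 0 < f x

namespace IsPosBddContinuous

variable {S : Type*} [TopologicalSpace S] {f : S → ℝ}

theorem exists_boundedContinuousFunction (hf : IsPosBddContinuous f) :
    ∃ g : BoundedContinuousFunction S ℝ, ⇑g = f := by
  obtain ⟨C, hC⟩ := hf.bddAbove
  refine ⟨.ofNormedAddCommGroup f hf.continuous C fun x => ?_, rfl⟩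
  rw [Real.norm_of_nonneg (hf.pos x).le]
  exact hC ⟨x, rfl⟩

theorem smul (hf : IsPosBddContinuous f) {c : ℝ} (hc : 0 < c) : IsPosBddContinuous (c • f) where
  continuous := hf.continuous.const_smul c
  bddAbove := by
    obtain ⟨C, hC⟩ := hf.bddAbove
    refine ⟨c * C, ?_⟩
    rintro _ ⟨x, rfl⟩
    exact mul_le_mul_of_nonneg_left (hC ⟨x, rfl⟩) hc.le
  pos x := mul_pos hc (hf.pos x)

end IsPosBddContinuous

namespace riskSensitiveBellman

variable {S U : Type*} [MeasurableSpace S] {k : S → U → ℝ}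

theorem map_smul (p : S → U → Measure S) {c : ℝ} (hc : 0 ≤ c) (f : S → ℝ) :
    riskSensitiveBellman k p (c • f) = c • riskSensitiveBellman k p f := by
  ext x
  simp only [riskSensitiveBellman, Pi.smul_apply, smul_eq_mul, integral_const_mul,
    Real.mul_iInf_of_nonneg hc, mul_left_comm]

variable [TopologicalSpace S] [OpensMeasurableSpace S]

theorem le_exp_mul_norm (p : S → U → Measure S) (x : S) (u : U) [IsProbabilityMeasure (p x u)]
    {f : BoundedContinuousFunction S ℝ} (hf : 0 ≤ f) :
    riskSensitiveBellman k p f x ≤ Real.exp (k x u) * ‖f‖ := by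
  have nonneg (v : U) : 0 ≤ Real.exp (k x v) * ∫ y, f y ∂(p x v) :=
    mul_nonneg (Real.exp_pos _).le (integral_nonneg hf)
  have integral_le : ∫ y, f y ∂(p x u) ≤ ‖f‖ :=
    (Real.le_norm_self _).trans (f.norm_integral_le_norm (p x u))
  calc riskSensitiveBellman k p f x
      ≤ Real.exp (k x u) * ∫ y, f y ∂(p x u) := ciInf_le ⟨0, Set.forall_mem_range.2 nonneg⟩ u
    _ ≤ Real.exp (k x u) * ‖f‖ := by gcongr

variable [TopologicalSpace U] [CompactSpace U] [Nonempty U] {p : S → U → ProbabilityMeasure S}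

theorem isPosBddContinuous (hp : Continuous fun q : S × U => p q.1 q.2)
    (hk : Continuous fun q : S × U => k q.1 q.2)
    (hkb : BddAbove (Set.range fun q : S × U => k q.1 q.2))
    {f : S → ℝ} (hf : IsPosBddContinuous f) :
    IsPosBddContinuous (riskSensitiveBellman k (fun x u => (p x u : Measure S)) f) := by
  obtain ⟨g, rfl⟩ := hf.exists_boundedContinuousFunction
  have continuous_integral :
      Continuous fun q : S × U => ∫ y, g y ∂(p q.1 q.2 : Measure S) :=
    ProbabilityMeasure.continuous_iff_forall_continuous_integral.1 hp g
  have continuous_objective : Continuous fun q : S × U =>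
      Real.exp (k q.1 q.2) * ∫ y, g y ∂(p q.1 q.2 : Measure S) :=
    hk.rexp.mul continuous_integral
  refine ⟨continuous_ciInf_of_compactSpace continuous_objective, ?_, fun x => ?_⟩
  · obtain ⟨K, hK⟩ := hkb
    refine ⟨Real.exp K * ‖g‖, ?_⟩
    rintro _ ⟨x, rfl⟩
    obtain ⟨u⟩ := ‹Nonempty U›
    calc riskSensitiveBellman k (fun x u => (p x u : Measure S)) g x
        ≤ Real.exp (k x u) * ‖g‖ := le_exp_mul_norm _ x u fun y => (hf.pos y).le
      _ ≤ Real.exp K * ‖g‖ := by gcongr; exact hK ⟨(x, u), rfl⟩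
  · exact lt_ciInf_of_continuous (continuous_objective.comp (Continuous.prodMk_right x)) fun u =>
      mul_pos (Real.exp_pos _) (integral_pos_of_forall_pos (g.integrable _) hf.pos)

end riskSensitiveBellman

theorem rvi_vi_explicit_relation_general
    {S U : Type*} [TopologicalSpace S] [MeasurableSpace S] [OpensMeasurableSpace S]
    [TopologicalSpace U] [CompactSpace U] [Nonempty U]
    (p : S → U → ProbabilityMeasure S) (hp : Continuous fun q : S × U => p q.1 q.2)
    (k : S → U → ℝ) (hk : Continuous fun q : S × U => k q.1 q.2)
    (hkb : BddAbove (Set.range fun q : S × U => k q.1 q.2))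
    (Λ : ℝ) (hΛ : 0 < Λ) (x₀ : S) (J V : ℕ → S → ℝ)
    (hJ0c : Continuous (J 0)) (hJ0b : BddAbove (Set.range (J 0))) (hJ0pos : ∀ x, 0 < J 0 x)
    (hJV0 : J 0 = V 0)
    (hJ : ∀ n x, J (n + 1) x
        = Λ⁻¹ * ⨅ u : U, Real.exp (k x u) * ∫ y, J n y ∂(p x u : Measure S))
    (hV : ∀ n x, V (n + 1) x
        = (V n x₀)⁻¹ * ⨅ u : U, Real.exp (k x u) * ∫ y, V n y ∂(p x u : Measure S)) :
    (∀ (n : ℕ) (x : S), V (n + 1) x = Λ * J (n + 1) x / J n x₀) ∧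
    ∀ n : ℕ, V (n + 1) x₀ / J (n + 1) x₀ = Λ / J n x₀ := by
  let T := riskSensitiveBellman k fun x u => (p x u : Measure S)
  have J_succ (n : ℕ) : J (n + 1) = Λ⁻¹ • T (J n) := funext (hJ n)
  have V_succ (n : ℕ) : V (n + 1) = (V n x₀)⁻¹ • T (V n) := funext (hV n)
  have J_mem_cone (n : ℕ) : IsPosBddContinuous (J n) := by
    induction n with
    | zero => exact ⟨hJ0c, hJ0b, hJ0pos⟩
    | succ n ih =>
      exact J_succ n ▸ (riskSensitiveBellman.isPosBddContinuous hp hk hkb ih).smul (inv_pos.2 hΛ)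
  have V_eq_smul (n : ℕ) : V (n + 1) = (Λ / J n x₀) • J (n + 1) :=
    relative_iterate_succ_eq_smul (ℓ := fun f : S → ℝ => f x₀)
      (fun c hc => riskSensitiveBellman.map_smul _ hc.le) (fun _ _ _ => rfl) hΛ hJV0 J_succ V_succ
      (fun n => (J_mem_cone n).pos x₀) n
  refine ⟨fun n x => ?_, fun n => ?_⟩
  · rw [V_eq_smul, Pi.smul_apply, smul_eq_mul, div_mul_eq_mul_div]
  · rw [V_eq_smul, Pi.smul_apply, smul_eq_mul,
      mul_div_cancel_right₀ _ ((J_mem_cone (n + 1)).pos x₀).ne']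

/-- **Explicit relation between the RVI and VI iterates:**
`V (n+1) x = Λ * J (n+1) x / J n x₀`; in particular
`V (n+1) x₀ / J (n+1) x₀ = Λ / J n x₀`. -/
theorem rvi_vi_explicit_relation
    {S U : Type*} [MetricSpace S] [CompactSpace S] [MeasurableSpace S] [BorelSpace S]
    [MetricSpace U] [CompactSpace U] [Nonempty U]
    (γ : Measure S) [IsFiniteMeasure γ]
    (hγ : ∀ O : Set S, IsOpen O → O.Nonempty → 0 < γ O)
    (φ : S → U → S → ℝ)
    (hφc : Continuous fun q : S × U × S => φ q.1 q.2.1 q.2.2)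
    (hφpos : ∀ x u y, 0 < φ x u y)
    (p : S → U → Measure S)
    (hp : ∀ x u, p x u = γ.withDensity fun y => ENNReal.ofReal (φ x u y))
    (hprob : ∀ x u, IsProbabilityMeasure (p x u))
    (k : S → U → ℝ) (hk : Continuous fun q : S × U => k q.1 q.2)
    (Λ : ℝ) (hΛ : 0 < Λ) (x₀ : S)
    (J V : ℕ → S → ℝ)
    (hJ0c : Continuous (J 0)) (hJ0pos : ∀ x, 0 < J 0 x) (hJV0 : J 0 = V 0)
    (hJ : ∀ n x, J (n + 1) x = Λ⁻¹ * ⨅ u : U, Real.exp (k x u) * ∫ y, J n y ∂(p x u))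
    (hV : ∀ n x, V (n + 1) x
        = (V n x₀)⁻¹ * ⨅ u : U, Real.exp (k x u) * ∫ y, V n y ∂(p x u)) :
    (∀ (n : ℕ) (x : S), V (n + 1) x = Λ * J (n + 1) x / J n x₀) ∧
    ∀ n : ℕ, V (n + 1) x₀ / J (n + 1) x₀ = Λ / J n x₀ := by
  let P (x : S) (u : U) : ProbabilityMeasure S := ⟨p x u, hprob x u⟩
  have continuous_P : Continuous fun q : S × U => P q.1 q.2 :=
    continuous_probabilityMeasure_of_withDensity (φ := fun q : S × U => φ q.1 q.2)
      (hφc.comp (Homeomorph.prodAssoc S U S).continuous) fun q => hp q.1 q.2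
  exact rvi_vi_explicit_relation_general P continuous_P k hk (isCompact_range hk).bddAbove Λ hΛ x₀
    J V hJ0c (isCompact_range hJ0c).bddAbove hJ0pos hJV0 hJ hV
end

section
/- A uniform limit of the RVI solves the normalized DP equation: let V_n be generated by the RVI with reference point x_0 from a continuous strictly positive V_0, and suppose V_n converges uniformly on S to a continuous strictly positive function V̄. Then V̄ satisfies V̄(x_0) · V̄(x) = inf_{u∈U} [ e^{k(x,u)} ∫_S V̄(y) p(dy|x,u) ] for every x ∈ S; that is, V̄ solves the DP equation with Λ = V̄(x_0). -/
open MeasureTheory Filter Topology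

/-!
Multiplying the iteration by the normalizing constant turns it into
`V n x₀ * V (n + 1) x = T (V n) x`, where `T` is the dynamic programming operator. Since each
`p x u` has mass one and `k x` is bounded above, `T` is continuous for uniform convergence, so both
sides can be passed to the limit. The integrals are meaningful because `T` preserves continuity:
the transition densities are continuous and `U` is compact.
-/

section UniformConvergence

variable {ι α : Type*} {l : Filter ι}

theorem tendstoUniformly_mul_left_of_bounded {c : α → ℝ} {M : ℝ} (hc : ∀ a, |c a| ≤ M)
    {F : ι → α → ℝ} {f : α → ℝ} (hF : TendstoUniformly F f l) :
    TendstoUniformly (fun i a => c a * F i a) (fun a => c a * f a) l := by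
  rw [Metric.tendstoUniformly_iff] at hF ⊢
  intro ε hε
  have hM : 0 < |M| + 1 := by positivity
  filter_upwards [hF (ε / (|M| + 1)) (by positivity)] with i hi a
  calc dist (c a * f a) (c a * F i a) = |c a| * dist (f a) (F i a) := by
        rw [Real.dist_eq, ← mul_sub, abs_mul, Real.dist_eq]
    _ ≤ (|M| + 1) * dist (f a) (F i a) := by
        gcongr
        linarith [hc a, le_abs_self M]
    _ < ε := (lt_div_iff₀' hM).1 (hi a)

theorem tendsto_ciInf_of_tendstoUniformly [Nonempty α] {F : ι → α → ℝ} {f : α → ℝ}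
    (hf : BddBelow (Set.range f)) (hF : TendstoUniformly F f l) :
    Tendsto (fun i => ⨅ a, F i a) l (𝓝 (⨅ a, f a)) := by
  rw [Metric.tendsto_nhds]
  intro ε hε
  filter_upwards [Metric.tendstoUniformly_iff.1 hF (ε / 2) (half_pos hε)] with i hi
  have hclose : ∀ a, |f a - F i a| < ε / 2 := hi
  have hlower : (⨅ a, f a) - ε / 2 ≤ ⨅ a, F i a :=
    le_ciInf fun a => by linarith [ciInf_le hf a, (abs_lt.1 (hclose a)).2]
  have hFi : BddBelow (Set.range (F i)) := by
    refine ⟨(⨅ a, f a) - ε / 2, ?_⟩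
    rintro _ ⟨a, rfl⟩
    linarith [ciInf_le hf a, (abs_lt.1 (hclose a)).2]
  have hupper : (⨅ a, F i a) - ε / 2 ≤ ⨅ a, f a :=
    le_ciInf fun a => by linarith [ciInf_le hFi a, (abs_lt.1 (hclose a)).1]
  rw [Real.dist_eq, abs_lt]
  constructor <;> linarith

end UniformConvergence

section Integrals

variable {ι S : Type*} [MeasurableSpace S] {l : Filter ι} [l.NeBot] [l.IsCountablyGenerated]
  {E : Type*} [NormedAddCommGroup E] {F : ι → S → E} {f : S → E}

theorem integrable_of_tendstoUniformly {μ : Measure S} [IsFiniteMeasure μ]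
    (hFint : ∀ i, Integrable (F i) μ) (hF : TendstoUniformly F f l) : Integrable f μ := by
  have hf : AEStronglyMeasurable f μ :=
    aestronglyMeasurable_of_tendsto_ae l (fun i => (hFint i).aestronglyMeasurable)
      (Eventually.of_forall hF.tendsto_at)
  obtain ⟨i, hi⟩ := (Metric.tendstoUniformly_iff.1 hF 1 one_pos).exists
  have hdiff : Integrable (f - F i) μ :=
    .of_bound (hf.sub (hFint i).aestronglyMeasurable) 1
      (Eventually.of_forall fun y => by simpa only [Pi.sub_apply, ← dist_eq_norm] using (hi y).le)
  simpa only [sub_add_cancel] using hdiff.add (hFint i)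

theorem tendstoUniformly_integral [NormedSpace ℝ E] {α : Type*} {μ : α → Measure S}
    [∀ a, IsProbabilityMeasure (μ a)] (hFint : ∀ i a, Integrable (F i) (μ a))
    (hF : TendstoUniformly F f l) :
    TendstoUniformly (fun i a => ∫ y, F i y ∂μ a) (fun a => ∫ y, f y ∂μ a) l := by
  rw [Metric.tendstoUniformly_iff]
  intro ε hε
  filter_upwards [Metric.tendstoUniformly_iff.1 hF (ε / 2) (half_pos hε)] with i hi a
  have hf : Integrable f (μ a) := integrable_of_tendstoUniformly (fun i => hFint i a) hF
  calc dist (∫ y, f y ∂μ a) (∫ y, F i y ∂μ a) = ‖∫ y, (f y - F i y) ∂μ a‖ := by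
        rw [dist_eq_norm, integral_sub hf (hFint i a)]
    _ ≤ ε / 2 * (μ a).real Set.univ :=
        norm_integral_le_of_norm_le_const
          (Eventually.of_forall fun y => by simpa only [← dist_eq_norm] using (hi y).le)
    _ < ε := by
        rw [probReal_univ, mul_one]
        exact half_lt_self hε

end Integrals

theorem continuous_integral_withDensity_ofReal {X S : Type*} [TopologicalSpace X]
    [FirstCountableTopology X] [LocallyCompactSpace X] [TopologicalSpace S] [CompactSpace S]
    [MeasurableSpace S] [OpensMeasurableSpace S] {γ : Measure S} [IsLocallyFiniteMeasure γ]
    {φ : X → S → ℝ} (hφ : Continuous (Function.uncurry φ)) {W : S → ℝ} (hW : Continuous W) :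
    Continuous fun x => ∫ y, W y ∂γ.withDensity fun y => ENNReal.ofReal (φ x y) := by
  have hdensity (x : X) : ∫ y, W y ∂γ.withDensity (fun y => ENNReal.ofReal (φ x y))
      = ∫ y, max (φ x y) 0 * W y ∂γ := by
    have hφx : Measurable (φ x) := (hφ.comp (.prodMk_right x)).measurable
    rw [integral_withDensity_eq_integral_toReal_smul hφx.ennreal_ofReal (by simp)]
    simp only [ENNReal.toReal_ofReal', smul_eq_mul]
  have hintegrand : Continuous (Function.uncurry fun x y => max (φ x y) 0 * W y) :=
    (hφ.max continuous_const).mul (hW.comp continuous_snd)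
  simpa only [hdensity, setIntegral_univ] using
    continuous_parametric_integral_of_continuous (μ := γ) hintegrand isCompact_univ

/-- The dynamic programming operator of risk-sensitive control,
`T W x = inf_u e^{k(x,u)} ∫ W(y) p(dy|x,u)`: the DP equation is the eigenvalue equation
`Λ V = T V`, and the relative value iteration iterates `T`, dividing by the value at `x₀`.
The kernel is encoded as a bare family of measures, and the infimum is Mathlib's real-valued one,
which is `0` for a family that is not bounded below. -/
noncomputable def dpOperator {S U : Type*} [MeasurableSpace S] (k : S → U → ℝ)
    (p : S → U → Measure S) (W : S → ℝ) (x : S) : ℝ :=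
  ⨅ u, Real.exp (k x u) * ∫ y, W y ∂p x u

section DynamicProgramming

variable {S U : Type*} [MeasurableSpace S] {k : S → U → ℝ} {p : S → U → Measure S}

theorem bddBelow_range_exp_mul_integral [∀ x u, IsProbabilityMeasure (p x u)] {x : S}
    (hk : BddAbove (Set.range (k x))) {W : S → ℝ} (hWint : ∀ u, Integrable W (p x u))
    (hW : BddBelow (Set.range W)) :
    BddBelow (Set.range fun u => Real.exp (k x u) * ∫ y, W y ∂p x u) := by
  obtain ⟨K, hK⟩ := hk
  obtain ⟨b, hb⟩ := hW
  refine ⟨Real.exp K * min b 0, ?_⟩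
  rintro _ ⟨u, rfl⟩
  have hmean : b ≤ ∫ y, W y ∂p x u := by
    simpa using integral_mono (integrable_const b) (hWint u) fun y => hb ⟨y, rfl⟩
  calc Real.exp K * min b 0 ≤ Real.exp (k x u) * min b 0 :=
        mul_le_mul_of_nonpos_right (Real.exp_le_exp.2 (hK ⟨u, rfl⟩)) (min_le_right b 0)
    _ ≤ Real.exp (k x u) * ∫ y, W y ∂p x u := by
        gcongr
        exact (min_le_left b 0).trans hmean

theorem tendsto_dpOperator [Nonempty U] [∀ x u, IsProbabilityMeasure (p x u)] {ι : Type*}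
    {l : Filter ι} [l.NeBot] [l.IsCountablyGenerated] {x : S} (hk : BddAbove (Set.range (k x)))
    {F : ι → S → ℝ} (hFint : ∀ i u, Integrable (F i) (p x u)) {W : S → ℝ}
    (hW : BddBelow (Set.range W)) (hF : TendstoUniformly F W l) :
    Tendsto (fun i => dpOperator k p (F i) x) l (𝓝 (dpOperator k p W x)) := by
  have hWint (u : U) : Integrable W (p x u) :=
    integrable_of_tendstoUniformly (fun i => hFint i u) hF
  have hbdd := bddBelow_range_exp_mul_integral hk hWint hW
  obtain ⟨K, hK⟩ := hk
  have hexp (u : U) : |Real.exp (k x u)| ≤ Real.exp K := by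
    rw [Real.abs_exp]
    exact Real.exp_le_exp.2 (hK ⟨u, rfl⟩)
  exact tendsto_ciInf_of_tendstoUniformly hbdd
    (tendstoUniformly_mul_left_of_bounded hexp (tendstoUniformly_integral hFint hF))

section Feller

variable [TopologicalSpace S] [TopologicalSpace U] [CompactSpace U]

theorem continuous_dpOperator (hk : Continuous fun q : S × U => k q.1 q.2) {W : S → ℝ}
    (hpW : Continuous fun q : S × U => ∫ y, W y ∂p q.1 q.2) : Continuous (dpOperator k p W) := by
  have hcost : Continuous fun q : S × U => Real.exp (k q.1 q.2) * ∫ y, W y ∂p q.1 q.2 :=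
    hk.rexp.mul hpW
  unfold dpOperator
  simpa only [Set.image_univ, sInf_range] using
    isCompact_univ.continuous_sInf
      (f := fun x u => Real.exp (k x u) * ∫ y, W y ∂p x u) hcost

theorem continuous_relativeValueIteration (hk : Continuous fun q : S × U => k q.1 q.2)
    (hp : ∀ W : S → ℝ, Continuous W → Continuous fun q : S × U => ∫ y, W y ∂p q.1 q.2)
    {x₀ : S} {V : ℕ → S → ℝ} (hV0 : Continuous (V 0))
    (hV : ∀ n x, V (n + 1) x = (V n x₀)⁻¹ * dpOperator k p (V n) x) (n : ℕ) :
    Continuous (V n) := by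
  induction n with
  | zero => exact hV0
  | succ n ih =>
    rw [funext (hV n)]
    exact continuous_const.mul (continuous_dpOperator hk (hp (V n) ih))

end Feller

theorem rvi_uniform_limit_solves_dp_general [Nonempty U] [∀ x u, IsProbabilityMeasure (p x u)]
    (hk : ∀ x, BddAbove (Set.range (k x))) {x₀ : S} {V : ℕ → S → ℝ}
    (hVint : ∀ n x u, Integrable (V n) (p x u))
    (hV : ∀ n x, V (n + 1) x = (V n x₀)⁻¹ * dpOperator k p (V n) x)
    {Vbar : S → ℝ} (hVbar : BddBelow (Set.range Vbar)) (hVbar₀ : Vbar x₀ ≠ 0)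
    (hunif : TendstoUniformly V Vbar atTop) (x : S) :
    Vbar x₀ * Vbar x = dpOperator k p Vbar x := by
  have hx₀ : Tendsto (fun n => V n x₀) atTop (𝓝 (Vbar x₀)) := hunif.tendsto_at x₀
  have hx : Tendsto (fun n => V (n + 1) x) atTop (𝓝 (Vbar x)) :=
    (hunif.tendsto_at x).comp (tendsto_add_atTop_nat 1)
  have hT : Tendsto (fun n => dpOperator k p (V n) x) atTop (𝓝 (dpOperator k p Vbar x)) :=
    tendsto_dpOperator (hk x) (fun n => hVint n x) hVbar hunif
  refine tendsto_nhds_unique ((hx₀.mul hx).congr' ?_) hT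
  filter_upwards [hx₀.eventually_ne hVbar₀] with n hn
  rw [hV n x, mul_inv_cancel_left₀ hn]

end DynamicProgramming

/-- **A uniform limit of the RVI solves the normalized DP equation:** if the RVI
iterates `V n` converge uniformly on `S` to a continuous strictly positive
`V̄`, then `V̄(x₀)·V̄(x) = inf_u [e^{k(x,u)} ∫ V̄ dp(·|x,u)]` for all `x`;
i.e. `V̄` solves the DP equation with `Λ = V̄(x₀)`. -/
theorem rvi_uniform_limit_solves_dp
    {S U : Type*} [MetricSpace S] [CompactSpace S] [MeasurableSpace S] [BorelSpace S]
    [MetricSpace U] [CompactSpace U] [Nonempty U]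
    (γ : Measure S) [IsFiniteMeasure γ]
    (hγ : ∀ O : Set S, IsOpen O → O.Nonempty → 0 < γ O)
    (φ : S → U → S → ℝ)
    (hφc : Continuous fun q : S × U × S => φ q.1 q.2.1 q.2.2)
    (hφpos : ∀ x u y, 0 < φ x u y)
    (p : S → U → Measure S)
    (hp : ∀ x u, p x u = γ.withDensity fun y => ENNReal.ofReal (φ x u y))
    (hprob : ∀ x u, IsProbabilityMeasure (p x u))
    (k : S → U → ℝ) (hk : Continuous fun q : S × U => k q.1 q.2)
    (x₀ : S)
    (V : ℕ → S → ℝ)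
    (hV0c : Continuous (V 0)) (hV0pos : ∀ x, 0 < V 0 x)
    (hV : ∀ n x, V (n + 1) x
        = (V n x₀)⁻¹ * ⨅ u : U, Real.exp (k x u) * ∫ y, V n y ∂(p x u))
    (Vbar : S → ℝ) (hVbarc : Continuous Vbar) (hVbarpos : ∀ x, 0 < Vbar x)
    (hunif : TendstoUniformly (fun n => V n) Vbar Filter.atTop) :
    ∀ x : S, Vbar x₀ * Vbar x
      = ⨅ u : U, Real.exp (k x u) * ∫ y, Vbar y ∂(p x u) := by
  have hVc : ∀ n, Continuous (V n) :=
    continuous_relativeValueIteration hk (fun W hW => by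
      simp only [hp]
      exact continuous_integral_withDensity_ofReal (φ := fun q : S × U => φ q.1 q.2)
        (hφc.comp (Homeomorph.prodAssoc S U S).continuous) hW) hV0c hV
  exact rvi_uniform_limit_solves_dp_general
    (fun x => (isCompact_range (hk.comp (.prodMk_right x))).bddAbove)
    (fun n x u => (hVc n).integrable_of_hasCompactSupport (.of_compactSpace (V n))) hV
    ⟨0, Set.forall_mem_range.2 fun y => (hVbarpos y).le⟩ (hVbarpos x₀).ne' hunif
end

section
/- Convergence of the relative value iteration from convergence of the value iteration at the reference point: let λ* > 0, let Φ : [0,∞) × ℝ^d → (0,∞) be such that t ↦ Φ(t,0) is continuous, and define Φ̄(t,x) := Φ(t,x) · exp( ∫_0^t (Φ(s,0) − λ*) ds ). If Φ̄(t,0) → C as t → ∞ for some constant C > 0, then: (i) for every x ∈ ℝ^d, Φ(t,x)/Φ̄(t,x) → λ*/C as t → ∞; (ii) ∫_0^t (Φ(s,0) − λ*) ds converges to the finite constant log(C/λ*) as t → ∞; and (iii) Φ(t,0) → λ* as t → ∞. -/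
open Filter Topology intervalIntegral

/-!
The normalizing factor `N t = exp (∫₀ᵗ (Φ(s,0) - λ*) ds)` satisfies the linear equation
`N' = Φ̄(·,0) - λ* N`. Multiplying by the integrating factor gives
`(e^{λ* t} (N - C / λ*))' = e^{λ* t} (Φ̄(·,0) - C) = o((e^{λ* t})')`, and since `e^{λ* t} → ∞` this
little-o relation integrates to `N → C / λ*`. The three limits are then read off from
`Φ / Φ̄ = 1 / N`, `∫₀ᵗ (Φ(s,0) - λ*) ds = log N` and `Φ(·,0) = Φ̄(·,0) / N`.
-/

section

variable {E : Type*} [NormedAddCommGroup E] [NormedSpace ℝ E]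

theorem isLittleO_atTop_of_hasDerivAt {f f' : ℝ → E} {g g' : ℝ → ℝ}
    (hf : ∀ᶠ t in atTop, HasDerivAt f (f' t) t) (hg : ∀ᶠ t in atTop, HasDerivAt g (g' t) t)
    (hg' : ∀ᶠ t in atTop, 0 ≤ g' t) (hg_top : Tendsto g atTop atTop) (h : f' =o[atTop] g') :
    f =o[atTop] g := by
  rw [Asymptotics.isLittleO_iff]
  intro c hc
  have hbound : ∀ᶠ t in atTop, ‖f' t‖ ≤ c / 2 * g' t := by
    filter_upwards [h.bound (half_pos hc), hg'] with t ht hpos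
    rwa [Real.norm_of_nonneg hpos] at ht
  obtain ⟨T, hT⟩ := eventually_atTop.1 (hf.and (hg.and hbound))
  choose hfT hgT hboundT using hT
  let B : ℝ → ℝ := fun t => c / 2 * g t + (‖f T‖ - c / 2 * g T)
  have hB : ∀ t, T ≤ t → HasDerivAt B (c / 2 * g' t) t := fun t ht =>
    ((hgT t ht).const_mul _).add_const _
  have hfB : ∀ t, T ≤ t → ‖f t‖ ≤ B t := fun t ht =>
    image_norm_le_of_norm_deriv_right_le_deriv_boundary'
      (fun s hs => (hfT s hs.1).continuousAt.continuousWithinAt)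
      (fun s hs => (hfT s hs.1).hasDerivWithinAt) (by simp [B])
      (fun s hs => (hB s hs.1).continuousAt.continuousWithinAt)
      (fun s hs => (hB s hs.1).hasDerivWithinAt)
      (fun s hs => hboundT s hs.1) ⟨ht, le_rfl⟩
  filter_upwards [eventually_ge_atTop T,
    (hg_top.const_mul_atTop (half_pos hc)).eventually_ge_atTop (‖f T‖ - c / 2 * g T)]
    with t ht hgt
  calc ‖f t‖ ≤ c / 2 * g t + (‖f T‖ - c / 2 * g T) := hfB t ht
    _ ≤ c * g t := by linarith
    _ ≤ c * ‖g t‖ := by gcongr; exact Real.le_norm_self _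

theorem tendsto_inv_smul_of_hasDerivAt_sub_smul {l : ℝ} (hl : 0 < l) {c : E} {u h : ℝ → E}
    (hu : ∀ᶠ t in atTop, HasDerivAt u (h t - l • u t) t) (hh : Tendsto h atTop (𝓝 c)) :
    Tendsto u atTop (𝓝 (l⁻¹ • c)) := by
  have hexp (t : ℝ) : HasDerivAt (fun t => Real.exp (l * t)) (l * Real.exp (l * t)) t := by
    simpa [mul_comm] using (hasDerivAt_const_mul l).exp
  have hexp_top : Tendsto (fun t => Real.exp (l * t)) atTop atTop :=
    Real.tendsto_exp_atTop.comp (tendsto_id.const_mul_atTop hl)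
  have hderiv : ∀ᶠ t in atTop, HasDerivAt (fun t => Real.exp (l * t) • (u t - l⁻¹ • c))
      (Real.exp (l * t) • (h t - c)) t := by
    filter_upwards [hu] with t ht
    refine ((hexp t).smul (ht.sub_const (l⁻¹ • c))).congr_deriv ?_
    rw [mul_comm l (Real.exp _), mul_smul, ← smul_add, smul_sub l, smul_inv_smul₀ hl.ne',
      sub_add_sub_cancel]
  have hforce : (fun t => h t - c) =o[atTop] fun _ => l :=
    (Asymptotics.isLittleO_const_iff hl.ne').2 (tendsto_sub_nhds_zero_iff.2 hh)
  have hforce_exp : (fun t => Real.exp (l * t) • (h t - c))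
      =o[atTop] fun t => l * Real.exp (l * t) := by
    simpa only [smul_eq_mul, mul_comm] using
      (Asymptotics.isBigO_refl (fun t => Real.exp (l * t)) atTop).smul_isLittleO hforce
  have hdiff := (isLittleO_atTop_of_hasDerivAt hderiv (.of_forall hexp)
    (.of_forall fun t => by positivity) hexp_top hforce_exp).tendsto_inv_smul_nhds_zero
  simpa only [inv_smul_smul₀ (Real.exp_ne_zero _), tendsto_sub_nhds_zero_iff] using hdiff

theorem hasDerivAt_integral_of_continuousOn_Ici [CompleteSpace E] {f : ℝ → E} {a t : ℝ}
    (hf : ContinuousOn f (Set.Ici a)) (ht : a < t) :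
    HasDerivAt (fun t => ∫ s in a..t, f s) (f t) t := by
  have hint : IntervalIntegrable f MeasureTheory.volume a t :=
    (hf.mono Set.Icc_subset_Ici_self).intervalIntegrable_of_Icc ht.le
  exact integral_hasDerivAt_right hint
    ((hf.mono Set.Ioi_subset_Ici_self).stronglyMeasurableAtFilter isOpen_Ioi t ht)
    (hf.continuousAt (Ici_mem_nhds ht))

end

theorem tendsto_exp_of_tendsto_mul_exp {l C : ℝ} (hl : 0 < l) {φ F : ℝ → ℝ}
    (hF : ∀ᶠ t in atTop, HasDerivAt F (φ t - l) t)
    (h : Tendsto (fun t => φ t * Real.exp (F t)) atTop (𝓝 C)) :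
    Tendsto (fun t => Real.exp (F t)) atTop (𝓝 (C / l)) := by
  rw [div_eq_inv_mul]
  refine tendsto_inv_smul_of_hasDerivAt_sub_smul hl ?_ h
  filter_upwards [hF] with t ht
  exact ht.exp.congr_deriv (by rw [smul_eq_mul]; ring)

theorem rvi_convergence_from_vi_convergence_general {X : Type*} (x₀ : X)
    {l : ℝ} (hl : 0 < l) {Φ Φbar : ℝ → X → ℝ}
    (hΦ : ∀ x, ∀ᶠ t in atTop, Φ t x ≠ 0)
    (hΦcont : ContinuousOn (fun t => Φ t x₀) (Set.Ici 0))
    (hΦbar : ∀ t x, Φbar t x = Φ t x * Real.exp (∫ s in (0 : ℝ)..t, (Φ s x₀ - l)))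
    {C : ℝ} (hC : 0 < C) (hconv : Tendsto (fun t => Φbar t x₀) atTop (𝓝 C)) :
    (∀ x, Tendsto (fun t => Φ t x / Φbar t x) atTop (𝓝 (l / C))) ∧
    Tendsto (fun t => ∫ s in (0 : ℝ)..t, (Φ s x₀ - l)) atTop (𝓝 (Real.log (C / l))) ∧
    Tendsto (fun t => Φ t x₀) atTop (𝓝 l) := by
  have hderiv : ∀ᶠ t in atTop,
      HasDerivAt (fun t => ∫ s in (0 : ℝ)..t, (Φ s x₀ - l)) (Φ t x₀ - l) t :=
    (eventually_gt_atTop 0).mono fun _ ht =>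
      hasDerivAt_integral_of_continuousOn_Ici (hΦcont.sub continuousOn_const) ht
  have hexp := tendsto_exp_of_tendsto_mul_exp hl hderiv (by simpa only [hΦbar] using hconv)
  have hCl : C / l ≠ 0 := (div_pos hC hl).ne'
  refine ⟨fun x => ?_, ?_, ?_⟩
  · rw [← inv_div C l]
    refine (hexp.inv₀ hCl).congr' ?_
    filter_upwards [hΦ x] with t ht
    rw [hΦbar, div_mul_cancel_left₀ ht]
  · simpa only [Real.log_exp] using hexp.log hCl
  · rw [← div_div_cancel₀ (b := l) hC.ne']
    refine (hconv.div hexp hCl).congr fun t => ?_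
    rw [Pi.div_apply, hΦbar, mul_div_cancel_right₀ _ (Real.exp_ne_zero _)]

/-- **Convergence of the relative value iteration from convergence of the value
iteration at the reference point:** with
`Φ̄(t,x) := Φ(t,x)·exp(∫₀ᵗ (Φ(s,0) − λ*) ds)` and `λ* > 0`, if `Φ̄(t,0) → C > 0`
as `t → ∞`, then (i) `Φ(t,x)/Φ̄(t,x) → λ*/C` for every `x`;
(ii) `∫₀ᵗ (Φ(s,0) − λ*) ds → log(C/λ*)`; and (iii) `Φ(t,0) → λ*`. -/
theorem rvi_convergence_from_vi_convergence {d : ℕ}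
    (lamstar : ℝ) (hlam : 0 < lamstar)
    (Φ : ℝ → (Fin d → ℝ) → ℝ)
    (hΦpos : ∀ t, 0 ≤ t → ∀ x, 0 < Φ t x)
    (hΦ0cont : ContinuousOn (fun t => Φ t 0) (Set.Ici (0 : ℝ)))
    (Φbar : ℝ → (Fin d → ℝ) → ℝ)
    (hΦbar : ∀ t x, Φbar t x
      = Φ t x * Real.exp (∫ s in (0 : ℝ)..t, (Φ s 0 - lamstar)))
    (C : ℝ) (hC : 0 < C)
    (hconv : Tendsto (fun t => Φbar t 0) atTop (nhds C)) :
    (∀ x : Fin d → ℝ,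
      Tendsto (fun t => Φ t x / Φbar t x) atTop (nhds (lamstar / C))) ∧
    Tendsto (fun t => ∫ s in (0 : ℝ)..t, (Φ s 0 - lamstar)) atTop
      (nhds (Real.log (C / lamstar))) ∧
    Tendsto (fun t => Φ t 0) atTop (nhds lamstar) :=
  rvi_convergence_from_vi_convergence_general 0 hlam
    (fun x => (eventually_ge_atTop 0).mono fun t ht => (hΦpos t ht x).ne')
    hΦ0cont hΦbar hC hconv
end
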